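/- arXiv:0708.3598 — 2 statements merged into one kernel-verified Lean document; each statement's English description precedes it below -/
import Mathlib

section
/- Let A be a commutative ring and J = (J₁,…,J_ℓ) a sequence generating an ideal I ⊆ A such that the Koszul complex K(A,J) is a resolution of A/I. Then for all i ≥ 0 there are isomorphisms of A/I-modules Tor_i^A(A/I, A/I) ≅ Λ^i_{A/I}(I/I²) and Ext^i_A(A/I, A/I) ≅ Hom_{A/I}(Λ^i_{A/I}(I/I²), A/I). -/
open CategoryTheory
open scoped BigOperators

/-- Coordinate description of the degree-`k` part of the Koszul complex on `ℓ`
generators: an alternating `A`-valued tensor in `k` indices from `Fin ℓ`. -/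
def IsAltTensor {A : Type} [CommRing A] (ℓ k : ℕ)
    (F : (Fin k → Fin ℓ) → A) : Prop :=
  (∀ v : Fin k → Fin ℓ, ¬ Function.Injective v → F v = 0) ∧
  (∀ (v : Fin k → Fin ℓ) (σ : Equiv.Perm (Fin k)),
    F (v ∘ σ) = (Equiv.Perm.sign σ : ℤ) • F v)

namespace KoszulTorExt

variable {A : Type} [CommRing A]

/-- The degree `k` part of the Koszul complex. -/
def K (A : Type) [CommRing A] (ℓ k : ℕ) : Submodule A ((Fin k → Fin ℓ) → A) where
  carrier := {F | IsAltTensor ℓ k F}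
  zero_mem' := ⟨fun _ _ => rfl, fun _ _ => by simp⟩
  add_mem' := by
    intro F G hF hG
    refine ⟨fun v hv => ?_, fun v σ => ?_⟩
    · simp [hF.1 v hv, hG.1 v hv]
    · simp only [Pi.add_apply, hF.2 v σ, hG.2 v σ, smul_add]
  smul_mem' := by
    intro a F hF
    refine ⟨fun v hv => ?_, fun v σ => ?_⟩
    · simp [hF.1 v hv]
    · simp only [Pi.smul_apply, hF.2 v σ, smul_comm a]

theorem cons_comp {ℓ k : ℕ} (b : Fin ℓ) (v : Fin k → Fin ℓ) (σ : Equiv.Perm (Fin k)) :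
    (Fin.cons b (v ∘ σ) : Fin (k + 1) → Fin ℓ) =
      (Fin.cons b v : Fin (k + 1) → Fin ℓ) ∘ (Equiv.Perm.decomposeFin.symm (0, σ)) := by
  funext i
  refine Fin.cases ?_ (fun j => ?_) i
  · simp
  · simp

/-- Contraction with the `b`-th basis covector. -/
def contr {ℓ : ℕ} (b : Fin ℓ) (k : ℕ) : K A ℓ (k + 1) →ₗ[A] K A ℓ k where
  toFun F := ⟨fun v => F.1 (Fin.cons b v), by
    refine ⟨fun v hv => ?_, fun v σ => ?_⟩
    · refine F.2.1 _ fun h => hv ?_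
      exact (Fin.cons_injective_iff.1 h).2
    · show F.1 (Fin.cons b (v ∘ σ)) = _
      rw [cons_comp, F.2.2]
      simp [Equiv.Perm.decomposeFin.symm_sign]⟩
  map_add' _ _ := rfl
  map_smul' _ _ := rfl

/-- The Koszul differential. -/
def kd {ℓ : ℕ} (J : Fin ℓ → A) (k : ℕ) : K A ℓ (k + 1) →ₗ[A] K A ℓ k :=
  ∑ b, J b • contr b k

theorem kd_apply {ℓ : ℕ} (J : Fin ℓ → A) (k : ℕ) (F : K A ℓ (k + 1)) (v : Fin k → Fin ℓ) :
    (kd J k F).1 v = ∑ b, J b * F.1 (Fin.cons b v) := by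
  simp [kd, contr, LinearMap.sum_apply, Finset.sum_apply]

theorem swap_cons {ℓ k : ℕ} (b c : Fin ℓ) (v : Fin k → Fin ℓ) (F : K A ℓ (k + 2)) :
    F.1 (Fin.cons b (Fin.cons c v : Fin (k + 1) → Fin ℓ)) =
      - F.1 (Fin.cons c (Fin.cons b v : Fin (k + 1) → Fin ℓ)) := by
  have h := F.2.2 (Fin.cons c (Fin.cons b v : Fin (k + 1) → Fin ℓ)) (Equiv.swap 0 1)
  rw [Equiv.Perm.sign_swap (by simp)] at h
  have e : (Fin.cons b (Fin.cons c v : Fin (k + 1) → Fin ℓ) : Fin (k + 2) → Fin ℓ) =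
    (Fin.cons c (Fin.cons b v : Fin (k + 1) → Fin ℓ) : Fin (k + 2) → Fin ℓ) ∘
      (Equiv.swap 0 1) := by
    funext i
    refine Fin.cases ?_ (fun j => Fin.cases ?_ (fun m => ?_) j) i
    · simp
    · simp
    · have : Equiv.swap (0 : Fin (k + 2)) 1 m.succ.succ = m.succ.succ :=
        Equiv.swap_apply_of_ne_of_ne (Fin.succ_ne_zero _)
          (by rw [← Fin.succ_zero_eq_one, Ne, Fin.succ_inj]; exact Fin.succ_ne_zero _)
      simp [this]
  rw [e, h]
  simp

theorem diag_cons {ℓ k : ℕ} (b : Fin ℓ) (v : Fin k → Fin ℓ) (F : K A ℓ (k + 2)) :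
    F.1 (Fin.cons b (Fin.cons b v : Fin (k + 1) → Fin ℓ)) = 0 := by
  refine F.2.1 _ fun h => ?_
  have := @h 0 1 (by simp)
  simp at this

theorem kd_kd {ℓ : ℕ} (J : Fin ℓ → A) (k : ℕ) : kd J k ∘ₗ kd J (k + 1) = 0 := by
  ext F v
  simp only [LinearMap.comp_apply, kd_apply, Finset.mul_sum, ← Finset.sum_product']
  refine Finset.sum_involution (fun p _ => (p.2, p.1)) ?_ ?_ ?_ ?_
  · rintro ⟨b, c⟩ -
    simp only
    rw [swap_cons c b]
    ring
  · rintro ⟨b, c⟩ - h e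
    apply h
    simp only [Prod.mk.injEq] at e
    obtain ⟨rfl, -⟩ := e
    simp [diag_cons]
  · simp
  · simp

/-- Restriction to strictly increasing multi-indices. -/
def res (A : Type) [CommRing A] (ℓ k : ℕ) : K A ℓ k →ₗ[A] ((Fin k ↪o Fin ℓ) → A) where
  toFun F s := F.1 s
  map_add' _ _ := rfl
  map_smul' _ _ := rfl

theorem res_bij (ℓ k : ℕ) : Function.Bijective (res A ℓ k) := by
  classical
  have hs : ∀ v : Fin k → Fin ℓ, Function.Injective v → StrictMono (v ∘ Tuple.sort v) :=
    fun v hv => (Tuple.monotone_sort v).strictMono_of_injective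
      (hv.comp (Tuple.sort v).injective)
  constructor
  · rw [injective_iff_map_eq_zero]
    intro F hF
    ext v
    by_cases hv : Function.Injective v
    · have h1 := congrFun hF (OrderEmbedding.ofStrictMono _ (hs v hv))
      have h2 : F.1 (v ∘ Tuple.sort v) = 0 := h1
      rw [F.2.2] at h2
      rcases Int.units_eq_one_or (Equiv.Perm.sign (Tuple.sort v)) with h | h <;>
        simpa [h] using h2
    · exact F.2.1 v hv
  · intro f
    let F : (Fin k → Fin ℓ) → A := fun v =>
      if hv : Function.Injective v then
        (Equiv.Perm.sign (Tuple.sort v) : ℤ) • f (OrderEmbedding.ofStrictMono _ (hs v hv))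
      else 0
    refine ⟨⟨F, fun v hv => dif_neg hv, fun v σ => ?_⟩, ?_⟩
    · by_cases hv : Function.Injective v
      · have hv' : Function.Injective (v ∘ σ) := hv.comp σ.injective
        have e : Tuple.sort v = σ * Tuple.sort (v ∘ σ) := by
          have h1 : v ∘ Tuple.sort v = v ∘ (σ * Tuple.sort (v ∘ σ)) :=
            Tuple.unique_monotone (Tuple.monotone_sort v) (Tuple.monotone_sort (v ∘ σ))
          ext i : 1
          exact hv (congrFun h1 i)
        have e2 : OrderEmbedding.ofStrictMono _ (hs _ hv') =
            OrderEmbedding.ofStrictMono _ (hs _ hv) := by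
          ext i
          simp [e]
        simp only [F, dif_pos hv, dif_pos hv', e2]
        have e3 : Equiv.Perm.sign (Tuple.sort v) =
            Equiv.Perm.sign σ * Equiv.Perm.sign (Tuple.sort (v ∘ σ)) := by
          rw [← map_mul, ← e]
        rw [e3, smul_smul]
        rcases Int.units_eq_one_or (Equiv.Perm.sign σ) with h | h <;> simp [h]
      · have hv' : ¬ Function.Injective (v ∘ σ) := fun h => hv (by
          have := h.comp σ.symm.injective
          simpa [Function.comp_assoc] using this)
        simp only [F, dif_neg hv, dif_neg hv', smul_zero]
    · funext s
      have e : Tuple.sort (s : Fin k → Fin ℓ) = 1 :=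
        (Tuple.sort_eq_refl_iff_monotone).2 s.monotone
      show F s = f s
      simp only [F, dif_pos s.injective]
      have e2 : OrderEmbedding.ofStrictMono _ (hs _ s.injective) = s := by
        ext i
        simp [e]
      rw [e2, e]
      simp

/-- The degree `k` part of the Koszul complex is free. -/
noncomputable def resEquiv (A : Type) [CommRing A] (ℓ k : ℕ) :
    K A ℓ k ≃ₗ[A] ((Fin k ↪o Fin ℓ) → A) :=
  LinearEquiv.ofBijective (res A ℓ k) (res_bij ℓ k)

/-- The hypothesis of the theorem. -/
def Acyclic {ℓ : ℕ} (J : Fin ℓ → A) : Prop :=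
  ∀ (k : ℕ) (F : (Fin (k + 1) → Fin ℓ) → A), IsAltTensor ℓ (k + 1) F →
      (∀ v : Fin k → Fin ℓ, ∑ b, J b * F (Fin.cons b v) = 0) →
      ∃ G : (Fin (k + 2) → Fin ℓ) → A, IsAltTensor ℓ (k + 2) G ∧
        ∀ v : Fin (k + 1) → Fin ℓ, F v = ∑ b, J b * G (Fin.cons b v)

theorem Acyclic.exact {ℓ : ℕ} {J : Fin ℓ → A} (h : Acyclic J) (k : ℕ) :
    Function.Exact (kd J (k + 1)) (kd J k) := by
  rw [LinearMap.exact_iff]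
  apply le_antisymm
  · intro F hF
    obtain ⟨G, hG, e⟩ := h k F.1 F.2 (fun v => by
      rw [← kd_apply, LinearMap.mem_ker.1 hF]; rfl)
    refine ⟨⟨G, hG⟩, ?_⟩
    ext v
    rw [kd_apply, e]
  · rw [LinearMap.range_le_ker_iff]
    exact kd_kd J k

/-- A family of ring elements as an alternating 1-tensor. -/
def ofFam {ℓ : ℕ} (c : Fin ℓ → A) : K A ℓ 1 :=
  ⟨fun v => c (v 0), by
    refine ⟨fun v hv => (hv (Function.injective_of_subsingleton v)).elim, fun v σ => ?_⟩
    have : σ = 1 := Subsingleton.elim _ _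
    subst this
    simp⟩

/-- The augmentation. -/
def aug (I : Ideal A) (ℓ : ℕ) : K A ℓ 0 →ₗ[A] A ⧸ I where
  toFun F := Ideal.Quotient.mk I (F.1 Fin.elim0)
  map_add' _ _ := by simp
  map_smul' a F := by
    simp [Algebra.smul_def]

theorem aug_surj (I : Ideal A) (ℓ : ℕ) : Function.Surjective (aug I ℓ) := by
  intro x
  obtain ⟨a, rfl⟩ := Ideal.Quotient.mk_surjective x
  refine ⟨⟨fun _ => a, fun v hv => (hv (Function.injective_of_subsingleton v)).elim,
    fun v σ => ?_⟩, rfl⟩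
  have : σ = 1 := Subsingleton.elim _ _
  subst this
  simp

theorem mem_span_iff {ℓ : ℕ} (J : Fin ℓ → A) (x : A) :
    x ∈ Ideal.span (Set.range J) ↔ ∃ c : Fin ℓ → A, ∑ b, J b * c b = x := by
  rw [Ideal.mem_span_range_iff_exists_fun]
  simp only [mul_comm]

theorem aug_exact {ℓ : ℕ} (J : Fin ℓ → A) (I : Ideal A) (hI : I = Ideal.span (Set.range J)) :
    Function.Exact (kd J 0) (aug I ℓ) := by
  intro F
  have h1 : aug I ℓ F = 0 ↔ F.1 Fin.elim0 ∈ I := Ideal.Quotient.eq_zero_iff_mem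
  rw [h1, hI, mem_span_iff]
  constructor
  · rintro ⟨c, hc⟩
    refine ⟨ofFam c, ?_⟩
    ext v
    have : v = Fin.elim0 := Subsingleton.elim _ _
    subst this
    rw [kd_apply, ← hc]
    rfl
  · rintro ⟨G, rfl⟩
    exact ⟨fun b => G.1 (Fin.cons b Fin.elim0), by rw [kd_apply]⟩

theorem mem_sq {ℓ : ℕ} (J : Fin ℓ → A) (I : Ideal A) (hI : I = Ideal.span (Set.range J))
    {x : A} (hx : x ∈ I ^ 2) : ∃ c : Fin ℓ → A, (∀ b, c b ∈ I) ∧ ∑ b, J b * c b = x := by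
  rw [pow_two] at hx
  refine Submodule.mul_induction_on hx ?_ ?_
  · intro m hm n hn
    rw [hI, mem_span_iff] at hm
    obtain ⟨c, rfl⟩ := hm
    refine ⟨fun b => c b * n, fun b => I.mul_mem_left _ hn, ?_⟩
    rw [Finset.sum_mul]
    simp only [mul_assoc]
  · rintro x y ⟨c, hc, rfl⟩ ⟨d, hd, rfl⟩
    refine ⟨fun b => c b + d b, fun b => I.add_mem (hc b) (hd b), ?_⟩
    simp only [mul_add, Finset.sum_add_distrib]

theorem Acyclic.coeff_mem {ℓ : ℕ} {J : Fin ℓ → A} (h : Acyclic J) (I : Ideal A)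
    (hI : I = Ideal.span (Set.range J)) (a : Fin ℓ → A) (ha : ∑ b, J b * a b ∈ I ^ 2) :
    ∀ b, a b ∈ I := by
  obtain ⟨c, hc, e⟩ := mem_sq J I hI ha
  obtain ⟨G, hG, hG'⟩ := h 0 (ofFam (a - c)).1 (ofFam (a - c)).2 (fun v => by
    simp [ofFam, mul_sub, e])
  intro b
  have h1 : a b - c b = ∑ b', J b' * G (Fin.cons b' (fun _ => b)) := hG' (fun _ => b)
  have h2 : a b - c b ∈ I := by
    rw [h1, hI]
    exact (mem_span_iff J _).2 ⟨_, rfl⟩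
  simpa using I.add_mem h2 (hc b)

/-- `I/I²` is free on the classes of the generators. -/
theorem Acyclic.cotangent_basis {ℓ : ℕ} {J : Fin ℓ → A} (h : Acyclic J) (I : Ideal A)
    (hI : I = Ideal.span (Set.range J)) :
    Nonempty (Module.Basis (Fin ℓ) (A ⧸ I) I.Cotangent) := by
  have hJ : ∀ b, J b ∈ I := fun b => hI ▸ Ideal.subset_span ⟨b, rfl⟩
  have key : ∀ c : Fin ℓ → A, ∑ b, Ideal.Quotient.mk I (c b) • I.toCotangent ⟨J b, hJ b⟩ =
      I.toCotangent ⟨∑ b, J b * c b, I.sum_mem fun b _ => I.mul_mem_right _ (hJ b)⟩ := by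
    intro c
    have : (⟨∑ b, J b * c b, I.sum_mem fun b _ => I.mul_mem_right _ (hJ b)⟩ : I) =
        ∑ b, c b • (⟨J b, hJ b⟩ : I) := by
      ext
      simp [mul_comm]
    rw [this, map_sum]
    refine Finset.sum_congr rfl fun b _ => ?_
    rw [map_smul]
    rfl
  refine ⟨Module.Basis.mk (v := fun b => I.toCotangent ⟨J b, hJ b⟩) ?_ ?_⟩
  · rw [Fintype.linearIndependent_iff]
    intro g hg
    choose a ha using fun b => Ideal.Quotient.mk_surjective (g b)
    obtain rfl : (fun b => Ideal.Quotient.mk I (a b)) = g := funext ha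
    rw [key, Ideal.toCotangent_eq_zero] at hg
    intro b
    exact Ideal.Quotient.eq_zero_iff_mem.2 (h.coeff_mem I hI a hg b)
  · rintro x -
    obtain ⟨⟨y, hy⟩, rfl⟩ := I.toCotangent_surjective x
    have hy' := hy
    rw [hI, mem_span_iff] at hy'
    obtain ⟨c, rfl⟩ := hy'
    rw [← key]
    exact Submodule.sum_mem _ fun b _ => Submodule.smul_mem _ _ (Submodule.subset_span ⟨b, rfl⟩)

/-- The Koszul complex. -/
noncomputable def kc {ℓ : ℕ} (J : Fin ℓ → A) : ChainComplex (ModuleCat A) ℕ :=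
  ChainComplex.of (fun k => ModuleCat.of A (K A ℓ k)) (fun k => ModuleCat.ofHom (kd J k))
    (fun k => by rw [← ModuleCat.ofHom_comp, kd_kd]; rfl)

theorem kc_d {ℓ : ℕ} (J : Fin ℓ → A) (k : ℕ) :
    (kc J).d (k + 1) k = ModuleCat.ofHom (kd J k) := by
  unfold kc
  exact ChainComplex.of_d (fun k => ModuleCat.of A (K A ℓ k)) (fun k => ModuleCat.ofHom (kd J k)) k

instance (ℓ k : ℕ) : Module.Projective A (K A ℓ k) :=
  Module.Projective.of_equiv (resEquiv A ℓ k).symm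

/-- The augmentation as a morphism. -/
noncomputable def augHom {ℓ : ℕ} (J : Fin ℓ → A) (I : Ideal A) :
    (kc J).X 0 ⟶ ModuleCat.of A (A ⧸ I) :=
  ModuleCat.ofHom (aug I ℓ)

theorem d_augHom {ℓ : ℕ} (J : Fin ℓ → A) (I : Ideal A) (hI : I = Ideal.span (Set.range J)) :
    (kc J).d 1 0 ≫ augHom J I = 0 := by
  rw [kc_d]
  ext x : 2
  exact (aug_exact J I hI).apply_apply_eq_zero x

/-- The augmentation as a chain map. -/
noncomputable def augMap {ℓ : ℕ} (J : Fin ℓ → A) (I : Ideal A)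
    (hI : I = Ideal.span (Set.range J)) :
    kc J ⟶ (ChainComplex.single₀ (ModuleCat A)).obj (ModuleCat.of A (A ⧸ I)) :=
  (ChainComplex.toSingle₀Equiv (kc J) _).symm ⟨augHom J I, d_augHom J I hI⟩

theorem augMap_f {ℓ : ℕ} (J : Fin ℓ → A) (I : Ideal A) (hI : I = Ideal.span (Set.range J)) :
    (augMap J I hI).f 0 = augHom J I :=
  ChainComplex.toSingle₀Equiv_symm_apply_f_zero _ _

/-- The Koszul resolution. -/
noncomputable def Acyclic.resolution {ℓ : ℕ} {J : Fin ℓ → A} (h : Acyclic J) (I : Ideal A)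
    (hI : I = Ideal.span (Set.range J)) : ProjectiveResolution (ModuleCat.of A (A ⧸ I)) where
  complex := kc J
  projective n := by
    show Projective (ModuleCat.of A (K A ℓ n))
    infer_instance
  π := augMap J I hI
  quasiIso := ⟨fun n => by
    cases n with
    | zero =>
      rw [ChainComplex.quasiIsoAt₀_iff, ShortComplex.quasiIso_iff_of_zeros' _ rfl rfl rfl]
      constructor
      · rw [ShortComplex.ShortExact.moduleCat_exact_iff_function_exact]
        change Function.Exact ((kc J).d 1 0).hom ((augMap J I hI).f 0).hom
        rw [kc_d, augMap_f]
        exact aug_exact J I hI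
      · rw [ModuleCat.epi_iff_surjective]
        change Function.Surjective ((augMap J I hI).f 0).hom
        rw [augMap_f]
        exact aug_surj I ℓ
    | succ m =>
      rw [quasiIsoAt_iff_exactAt' (hL := ChainComplex.exactAt_succ_single_obj ..),
        HomologicalComplex.exactAt_iff' _ (m + 2) (m + 1) m (by simp) (by simp),
        ShortComplex.ShortExact.moduleCat_exact_iff_function_exact]
      change Function.Exact ((kc J).d (m + 1 + 1) (m + 1)).hom ((kc J).d (m + 1) m).hom
      rw [kc_d, kc_d]
      exact h.exact m⟩

/-- Homology of a complex with vanishing differentials. -/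
theorem homology_of_zero {ι R : Type} [Ring R] {c : ComplexShape ι}
    (C : HomologicalComplex (ModuleCat R) c) (i : ι) (h : ∀ i j, C.d i j = 0) :
    Nonempty (C.homology i ≅ C.X i) :=
  ⟨(ShortComplex.HomologyData.ofZeros (C.sc i) (h _ _) (h _ _)).left.homologyIso⟩

theorem tensor_map_zero {ℓ : ℕ} (J : Fin ℓ → A) (I : Ideal A)
    (hI : I = Ideal.span (Set.range J)) (i j : ℕ) :
    (((MonoidalCategory.tensoringLeft (ModuleCat A)).obj
      (ModuleCat.of A (A ⧸ I))).mapHomologicalComplex _ |>.obj (kc J)).d i j = 0 := by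
  by_cases hij : j + 1 = i
  · subst hij
    have hJ : ∀ b, J b ∈ I := fun b => hI ▸ Ideal.subset_span ⟨b, rfl⟩
    rw [Functor.mapHomologicalComplex_obj_d, kc_d]
    ext x : 2
    change (LinearMap.lTensor (A ⧸ I) (kd J j)) x = 0
    have : LinearMap.lTensor (A ⧸ I) (kd J j) = 0 := by
      apply TensorProduct.ext'
      intro q F
      rw [LinearMap.lTensor_tmul, kd, LinearMap.sum_apply, TensorProduct.tmul_sum]
      refine Finset.sum_eq_zero fun b _ => ?_
      rw [LinearMap.smul_apply, TensorProduct.tmul_smul, TensorProduct.smul_tmul']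
      have : J b • q = 0 := by
        rw [Algebra.smul_def]
        simp [Ideal.Quotient.eq_zero_iff_mem.2 (hJ b)]
      rw [this, TensorProduct.zero_tmul]
    rw [this]
    rfl
  · exact HomologicalComplex.shape _ _ _ hij

theorem hom_map_zero {ℓ : ℕ} (J : Fin ℓ → A) (I : Ideal A)
    (hI : I = Ideal.span (Set.range J)) (i j : ℕ) :
    ((kc J).linearYonedaObj A (ModuleCat.of A (A ⧸ I))).d i j = 0 := by
  by_cases hij : i + 1 = j
  · subst hij
    have hJ : ∀ b, J b ∈ I := fun b => hI ▸ Ideal.subset_span ⟨b, rfl⟩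
    rw [ChainComplex.linearYonedaObj_d, kc_d]
    ext f : 2
    change ModuleCat.ofHom (kd J i) ≫ (show ModuleCat.of A (K A ℓ i) ⟶ _ from f) = 0
    ext F : 2
    change (show ModuleCat.of A (K A ℓ i) ⟶ ModuleCat.of A (A ⧸ I) from f).hom (kd J i F) = 0
    generalize (show ModuleCat.of A (K A ℓ i) ⟶ ModuleCat.of A (A ⧸ I) from f).hom = g
    rw [kd, LinearMap.sum_apply, map_sum]
    refine Finset.sum_eq_zero fun b _ => ?_
    rw [LinearMap.smul_apply, map_smul]
    generalize g _ = q
    change A ⧸ I at q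
    change J b • q = 0
    rw [Algebra.smul_def]
    simp [Ideal.Quotient.eq_zero_iff_mem.2 (hJ b)]
  · exact HomologicalComplex.shape _ _ _ hij

/-- Restriction of scalars of a free module. -/
noncomputable def restrictIso (I : Ideal A) (S : Type) :
    (ModuleCat.restrictScalars (algebraMap A (A ⧸ I))).obj
      (ModuleCat.of (A ⧸ I) (S → A ⧸ I)) ≅ ModuleCat.of A (S → A ⧸ I) :=
  LinearEquiv.toModuleIso
    { toFun := fun f => f
      invFun := fun f => f
      map_add' := fun _ _ => rfl
      map_smul' := fun _ _ => rfl
      left_inv := fun _ => rfl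
      right_inv := fun _ => rfl }

/-- The comparison with a free module, via restriction of scalars. -/
noncomputable def restrictIso' (I : Ideal A) (S M : Type) [AddCommGroup M] [Module (A ⧸ I) M]
    (e : M ≃ₗ[A ⧸ I] (S → A ⧸ I)) :
    (ModuleCat.restrictScalars (algebraMap A (A ⧸ I))).obj
      (ModuleCat.of (A ⧸ I) M) ≅ ModuleCat.of A (S → A ⧸ I) :=
  (ModuleCat.restrictScalars (algebraMap A (A ⧸ I))).mapIso e.toModuleIso ≪≫ restrictIso I S

end KoszulTorExt

/-- **Tor and Ext of `A/I` for a Koszul-regular sequence.**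
Let `A` be a commutative ring and `J = (J₁, …, J_ℓ)` a sequence generating the ideal
`I ⊆ A` such that the Koszul complex `K(A, J)` is a resolution of `A/I` (acyclicity in
positive degrees is expressed below; `H₀ = A/I` holds automatically).  Then for all
`i ≥ 0` there are isomorphisms of `A/I`-modules (equivalently, of `A`-modules on which
`I` acts trivially)
`Tor_i^A(A/I, A/I) ≅ Λ^i_{A/I}(I/I²)` and
`Ext^i_A(A/I, A/I) ≅ Hom_{A/I}(Λ^i_{A/I}(I/I²), A/I)`,
where `I/I²` is the cotangent module `I.Cotangent`. -/
theorem tor_ext_of_koszul_resolution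
    (A : Type) [CommRing A] (ℓ : ℕ) (J : Fin ℓ → A)
    (I : Ideal A) (hI : I = Ideal.span (Set.range J))
    -- acyclicity of the Koszul complex in positive degrees
    (hacyclic : ∀ (k : ℕ) (F : (Fin (k + 1) → Fin ℓ) → A), IsAltTensor ℓ (k + 1) F →
      (∀ v : Fin k → Fin ℓ, ∑ b, J b * F (Fin.cons b v) = 0) →
      ∃ G : (Fin (k + 2) → Fin ℓ) → A, IsAltTensor ℓ (k + 2) G ∧
        ∀ v : Fin (k + 1) → Fin ℓ, F v = ∑ b, J b * G (Fin.cons b v)) :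
    ∀ i : ℕ,
      Nonempty
        (((Tor (ModuleCat A) i).obj (ModuleCat.of A (A ⧸ I))).obj
            (ModuleCat.of A (A ⧸ I))
          ≅ (ModuleCat.restrictScalars (algebraMap A (A ⧸ I))).obj
              (ModuleCat.of (A ⧸ I) (⋀[A ⧸ I]^i I.Cotangent)))
      ∧
      Nonempty
        (((Ext A (ModuleCat A) i).obj (Opposite.op (ModuleCat.of A (A ⧸ I)))).obj
            (ModuleCat.of A (A ⧸ I))
          ≅ (ModuleCat.restrictScalars (algebraMap A (A ⧸ I))).obj
              (ModuleCat.of (A ⧸ I)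
                (Module.Dual (A ⧸ I) (⋀[A ⧸ I]^i I.Cotangent)))) := by

  classical
  intro i
  have h : KoszulTorExt.Acyclic J := hacyclic
  obtain ⟨b⟩ := h.cotangent_basis I hI
  have B : Module.Basis (Fin i ↪o Fin ℓ) (A ⧸ I) (⋀[A ⧸ I]^i I.Cotangent) :=
    (b.exteriorPower i).reindex Set.powersetCard.ofFinEmbEquiv.symm
  have : Finite (Fin i ↪o Fin ℓ) := DFunLike.finite _
  have : Fintype (Fin i ↪o Fin ℓ) := Fintype.ofFinite _
  constructor
  · obtain ⟨e⟩ := KoszulTorExt.homology_of_zero _ i (KoszulTorExt.tensor_map_zero J I hI)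
    refine ⟨(h.resolution I hI).isoLeftDerivedObj
      ((MonoidalCategory.tensoringLeft (ModuleCat A)).obj (ModuleCat.of A (A ⧸ I))) i ≪≫ e ≪≫ ?_ ≪≫
      (KoszulTorExt.restrictIso' I (Fin i ↪o Fin ℓ) _ B.equivFun).symm⟩
    exact LinearEquiv.toModuleIso
      ((LinearEquiv.lTensor (A ⧸ I) (KoszulTorExt.resEquiv A ℓ i)).trans
        (TensorProduct.piScalarRight A A (A ⧸ I) (Fin i ↪o Fin ℓ)))
  · obtain ⟨e⟩ := KoszulTorExt.homology_of_zero _ i (KoszulTorExt.hom_map_zero J I hI)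
    refine ⟨(h.resolution I hI).isoExt i (ModuleCat.of A (A ⧸ I)) ≪≫ e ≪≫ ?_ ≪≫
      (KoszulTorExt.restrictIso' I (Fin i ↪o Fin ℓ) _ (B.constr (A ⧸ I)).symm).symm⟩
    exact LinearEquiv.toModuleIso
      ((ModuleCat.homLinearEquiv (S := A) (M := ModuleCat.of A (KoszulTorExt.K A ℓ i))
        (N := ModuleCat.of A (A ⧸ I))).trans
        ((Module.Basis.ofEquivFun (KoszulTorExt.resEquiv A ℓ i)).constr A).symm)
end

section
/- Square-zero of the classical BRST charge for an equivariant moment map: Let g be a finite-dimensional Lie algebra with structure constants f_{ab}^c and J : g → C^∞(M) a linear map with {J_a, J_b} = Σ_c f_{ab}^c J_c (Poisson Lie algebra morphism). On the graded Poisson algebra A ⊗ Λ(g ⊕ g*) with the even super-Poisson bracket determined by {ξ_a, ξ^b} = 2δ_a^b, {ξ_a,ξ_b} = {ξ^a,ξ^b} = 0 and the Poisson bracket on A = C^∞(M), the element θ = -¼ Σ_{a,b,c} f_{ab}^c ξ^a ξ^b ξ_c + Σ_a J_a ξ^a satisfies {θ,θ} = 0. Consequently D := {θ,·} is a square-zero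 derivation of degree +1. -/
open scoped BigOperators

/-- The sign `(-1)^x` (for an integer exponent `x`; only the parity of `x` matters). -/
def gsgn (K : Type*) [Field K] (x : ℤ) : K := (-1 : K) ^ x.natAbs

theorem brst_sum3 {W : Type*} [AddCommGroup W] {ℓ : ℕ} (F : Fin ℓ → Fin ℓ → Fin ℓ → W) :
    (∑ x, ∑ a, ∑ b, F x a b) = ∑ a, ∑ b, ∑ x, F x a b := by
  rw [Finset.sum_comm]
  exact Finset.sum_congr rfl fun a _ => Finset.sum_comm

theorem brst_sum4 {W : Type*} [AddCommGroup W] {ℓ : ℕ}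
    (F : Fin ℓ → Fin ℓ → Fin ℓ → Fin ℓ → W) :
    (∑ e, ∑ s, ∑ q, ∑ r, F e s q r) = ∑ q, ∑ r, ∑ s, ∑ e, F e s q r := by
  calc _ = ∑ e, ∑ q, ∑ r, ∑ s, F e s q r := Finset.sum_congr rfl fun e _ => brst_sum3 _
    _ = ∑ q, ∑ r, ∑ e, ∑ s, F e s q r := brst_sum3 _
    _ = _ := Finset.sum_congr rfl fun q _ => Finset.sum_congr rfl fun r _ => Finset.sum_comm

theorem brst_sum5 {W : Type*} [AddCommGroup W] {ℓ : ℕ}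
    (F : Fin ℓ → Fin ℓ → Fin ℓ → Fin ℓ → Fin ℓ → W) :
    (∑ e, ∑ r, ∑ s, ∑ p, ∑ q, F e r s p q) = ∑ p, ∑ q, ∑ r, ∑ s, ∑ e, F e r s p q := by
  calc _ = ∑ e, ∑ r, ∑ p, ∑ q, ∑ s, F e r s p q :=
        Finset.sum_congr rfl fun e _ => Finset.sum_congr rfl fun r _ => brst_sum3 _
    _ = ∑ e, ∑ p, ∑ q, ∑ r, ∑ s, F e r s p q := Finset.sum_congr rfl fun e _ => brst_sum3 _
    _ = ∑ p, ∑ q, ∑ e, ∑ r, ∑ s, F e r s p q := brst_sum3 _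
    _ = _ := Finset.sum_congr rfl fun q _ => Finset.sum_congr rfl fun r _ => brst_sum3 _

set_option maxHeartbeats 2000000 in
/-- **Square-zero of the classical BRST charge for an equivariant moment map.**
Let `g` be a finite-dimensional Lie algebra with structure constants `f_{ab}^c` and
`J : g → C^∞(M)` a Poisson Lie algebra morphism (`{J_a, J_b} = ∑_c f_{ab}^c J_c`).  On
the graded Poisson algebra `A ⊗ Λ(g ⊕ g*)` with the even super-Poisson bracket `B`
determined by `B ξ_a ξ^b = 2 δ_a^b`, `B ξ_a ξ_b = 0 = B ξ^a ξ^b` and by the Poisson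
bracket on `A = C^∞(M)`, the element
`θ = -¼ ∑_{a,b,c} f_{ab}^c ξ^a ξ^b ξ_c + ∑_a J_a ξ^a` satisfies `B θ θ = 0`.
Consequently `D := B θ ·` is a square-zero derivation of degree `+1`.
(Formalized for any graded supercommutative algebra `W` with an even super-Poisson
bracket containing `A` and the ghost/antighost generators with the stated relations.) -/
theorem classical_brst_charge_square_zero
    (K : Type*) [Field K] [CharZero K]
    -- the Poisson algebra `A = C^∞(M)`
    (A : Type*) [CommRing A] [Algebra K A]
    (P : A →ₗ[K] A →ₗ[K] A)
    (hPanti : ∀ x y : A, P x y = - P y x)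
    (hPleib : ∀ x y z : A, P x (y * z) = P x y * z + y * P x z)
    (hPjac : ∀ x y z : A, P x (P y z) = P (P x y) z + P y (P x z))
    -- the graded super-Poisson algebra `W = A ⊗ Λ(g ⊕ g*)`
    (W : Type*) [AddCommGroup W] [Module K W]
    (𝒲 : ℤ → Submodule K W)
    (mul : W →ₗ[K] W →ₗ[K] W) (one : W)
    (B : W →ₗ[K] W →ₗ[K] W)
    (hone : one ∈ 𝒲 0)
    (honemul : ∀ x : W, mul one x = x ∧ mul x one = x)
    (hmuldeg : ∀ (i j : ℤ), ∀ x ∈ 𝒲 i, ∀ y ∈ 𝒲 j, mul x y ∈ 𝒲 (i + j))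
    (hmulcomm : ∀ (i j : ℤ), ∀ x ∈ 𝒲 i, ∀ y ∈ 𝒲 j, mul x y = gsgn K (i * j) • mul y x)
    (hmulassoc : ∀ x y z : W, mul (mul x y) z = mul x (mul y z))
    -- `B` is an even graded Poisson bracket
    (hBdeg : ∀ (i j : ℤ), ∀ x ∈ 𝒲 i, ∀ y ∈ 𝒲 j, B x y ∈ 𝒲 (i + j))
    (hBanti : ∀ (i j : ℤ), ∀ x ∈ 𝒲 i, ∀ y ∈ 𝒲 j, B x y = - (gsgn K (i * j) • B y x))
    (hBleib : ∀ (i j : ℤ), ∀ x ∈ 𝒲 i, ∀ y ∈ 𝒲 j, ∀ z : W,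
      B x (mul y z) = mul (B x y) z + gsgn K (i * j) • mul y (B x z))
    (hBjac : ∀ (i j : ℤ), ∀ x ∈ 𝒲 i, ∀ y ∈ 𝒲 j, ∀ z : W,
      B x (B y z) = B (B x y) z + gsgn K (i * j) • B y (B x z))
    -- the embedding of `A` in degree `0`
    (φ : A →ₗ[K] W)
    (hφdeg : ∀ x : A, φ x ∈ 𝒲 0)
    (hφone : φ 1 = one)
    (hφmul : ∀ x y : A, φ (x * y) = mul (φ x) (φ y))
    (hφP : ∀ x y : A, B (φ x) (φ y) = φ (P x y))
    -- ghosts (degree `1`) and antighosts (degree `-1`)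
    (ℓ : ℕ) (gh ag : Fin ℓ → W)
    (hghdeg : ∀ a, gh a ∈ 𝒲 1) (hagdeg : ∀ a, ag a ∈ 𝒲 (-1))
    -- `{ξ_a, ξ^b} = 2 δ_a^b`, `{ξ_a, ξ_b} = 0 = {ξ^a, ξ^b}`
    (hBag : ∀ a b, B (ag a) (gh b) = if a = b then (2 : K) • one else 0)
    (hBgh : ∀ a b, B (gh a) (gh b) = 0)
    (hBagag : ∀ a b, B (ag a) (ag b) = 0)
    (hBAgh : ∀ (x : A) (a : Fin ℓ), B (φ x) (gh a) = 0)
    (hBAag : ∀ (x : A) (a : Fin ℓ), B (φ x) (ag a) = 0)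
    -- the structure constants and the equivariant moment map
    (f : Fin ℓ → Fin ℓ → Fin ℓ → K)
    (hfanti : ∀ a b c, f a b c = - f b a c)
    (hfjac : ∀ a b c d,
      (∑ e, (f a b e * f e c d + f b c e * f e a d + f c a e * f e b d)) = 0)
    (J : Fin ℓ → A)
    (hJ : ∀ a b, P (J a) (J b) = ∑ c, f a b c • J c) :
    (let θ : W :=
      - ((4 : K)⁻¹ • (∑ a, ∑ b, ∑ c, f a b c • mul (gh a) (mul (gh b) (ag c))))
      + ∑ a, mul (φ (J a)) (gh a)
     B θ θ = 0) := by
  intro θ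
  have g1 : gsgn K 1 = -1 := by simp [gsgn]
  have g0 : gsgn K 0 = 1 := by simp [gsgn]
  have gm : gsgn K (-1) = -1 := by simp [gsgn]
  have hQ3 : ∀ a b c, mul (gh a) (mul (gh b) (ag c)) ∈ 𝒲 1 := fun a b c => by
    have := hmuldeg _ _ _ (hghdeg a) _ (hmuldeg _ _ _ (hghdeg b) _ (hagdeg c))
    simpa using this
  have hθ : θ ∈ 𝒲 1 := by
    refine Submodule.add_mem _ (Submodule.neg_mem _ (Submodule.smul_mem _ _ ?_)) ?_
    · exact Submodule.sum_mem _ fun a _ => Submodule.sum_mem _ fun b _ =>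
        Submodule.sum_mem _ fun c _ => Submodule.smul_mem _ _ (hQ3 a b c)
    · refine Submodule.sum_mem _ fun a _ => ?_
      simpa using hmuldeg _ _ _ (hφdeg (J a)) _ (hghdeg a)
  have hcgg : ∀ a b, mul (gh a) (gh b) = - mul (gh b) (gh a) := fun a b => by
    have := hmulcomm _ _ _ (hghdeg a) _ (hghdeg b)
    simpa [g1] using this
  have hcφ : ∀ x a, mul (gh a) (φ x) = mul (φ x) (gh a) := fun x a => by
    have := hmulcomm _ _ _ (hghdeg a) _ (hφdeg x)
    simpa [g0] using this
  have hBga : ∀ a b, B (gh a) (ag b) = if b = a then (2 : K) • one else 0 := fun a b => by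
    have := hBanti _ _ _ (hghdeg a) _ (hagdeg b)
    rw [hBag, mul_neg, mul_one, gm] at this
    rw [this]
    split_ifs <;> simp
  have hBgA : ∀ x a, B (gh a) (φ x) = 0 := fun x a => by
    have := hBanti _ _ _ (hghdeg a) _ (hφdeg x)
    simpa [g0, hBAgh] using this
  have hBaA : ∀ x a, B (ag a) (φ x) = 0 := fun x a => by
    have := hBanti _ _ _ (hagdeg a) _ (hφdeg x)
    simpa [g0, hBAag] using this
  -- Leibniz rules specialised
  have Lgg : ∀ d a z, B (gh d) (mul (gh a) z) = - mul (gh a) (B (gh d) z) := fun d a z => by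
    have := hBleib _ _ _ (hghdeg d) _ (hghdeg a) z
    simpa [g1, hBgh] using this
  have LgA : ∀ d x z, B (gh d) (mul (φ x) z) = mul (φ x) (B (gh d) z) := fun d x z => by
    have := hBleib _ _ _ (hghdeg d) _ (hφdeg x) z
    simpa [g0, hBgA] using this
  have Lag : ∀ d a z, B (ag d) (mul (gh a) z) =
      (if d = a then (2 : K) • z else 0) - mul (gh a) (B (ag d) z) := fun d a z => by
    have := hBleib _ _ _ (hagdeg d) _ (hghdeg a) z
    rw [this, hBag, mul_one, gm]
    split_ifs <;> simp [(honemul z).1, sub_eq_add_neg]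
  have LaA : ∀ d x z, B (ag d) (mul (φ x) z) = mul (φ x) (B (ag d) z) := fun d x z => by
    have := hBleib _ _ _ (hagdeg d) _ (hφdeg x) z
    simpa [g0, hBaA] using this
  have LAg : ∀ x a z, B (φ x) (mul (gh a) z) = mul (gh a) (B (φ x) z) := fun x a z => by
    have := hBleib _ _ _ (hφdeg x) _ (hghdeg a) z
    simpa [g0, hBAgh] using this
  have LAA : ∀ x y z, B (φ x) (mul (φ y) z) = mul (φ (P x y)) z + mul (φ y) (B (φ x) z) :=
    fun x y z => by
    have := hBleib _ _ _ (hφdeg x) _ (hφdeg y) z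
    simpa [g0, hφP] using this
  -- the differential on generators
  have Dg : ∀ d, B θ (gh d) = -((2 : K)⁻¹ • ∑ a, ∑ b, f a b d • mul (gh a) (gh b)) := fun d => by
    have h1 : B θ (gh d) = B (gh d) θ := by
      have := hBanti _ _ _ hθ _ (hghdeg d)
      simpa [g1] using this
    rw [h1]
    simp only [θ, map_add, map_neg, map_smul, map_sum, Lgg, LgA, hBga, hBgh, map_zero,
      Finset.sum_const_zero, add_zero, neg_neg]
    simp only [apply_ite (mul _), map_smul, map_zero, (honemul _).2, smul_ite, smul_zero,
      Finset.sum_ite_eq', Finset.mem_univ, if_true, neg_inj, Finset.smul_sum, smul_smul]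
    refine Finset.sum_congr rfl fun a _ => Finset.sum_congr rfl fun b _ => ?_
    congr 1
    ring
  have Da : ∀ d, B θ (ag d) = -(∑ b, ∑ c, f d b c • mul (gh b) (ag c)) + (2 : K) • φ (J d) :=
    fun d => by
    have h1 : B θ (ag d) = B (ag d) θ := by
      have := hBanti _ _ _ hθ _ (hagdeg d)
      simpa [gm] using this
    have h2 : (∑ a, ∑ b, ∑ c, f a b c • B (ag d) (mul (gh a) (mul (gh b) (ag c))))
        = (4 : K) • ∑ b, ∑ c, f d b c • mul (gh b) (ag c) := by
      have e1 : (∑ a, ∑ b, ∑ c, f a b c • (if d = a then (2 : K) • mul (gh b) (ag c) else 0))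
          = (2 : K) • ∑ b, ∑ c, f d b c • mul (gh b) (ag c) := by
        rw [Finset.sum_eq_single d]
        · simp only [if_true, Finset.smul_sum, smul_smul, mul_comm]
        · intro a _ ha
          simp [Ne.symm ha]
        · simp
      have e2 : (∑ a, ∑ b, ∑ c, f a b c • (if d = b then (2 : K) • mul (gh a) (ag c) else 0))
          = -((2 : K) • ∑ b, ∑ c, f d b c • mul (gh b) (ag c)) := by
        rw [Finset.smul_sum, ← Finset.sum_neg_distrib]
        refine Finset.sum_congr rfl fun a _ => ?_
        rw [Finset.sum_eq_single d]
        · simp only [if_true, Finset.smul_sum, smul_smul, ← Finset.sum_neg_distrib, ← neg_smul]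
          refine Finset.sum_congr rfl fun c _ => ?_
          rw [hfanti a d c]
          congr 1
          ring
        · intro b _ hb
          simp [Ne.symm hb]
        · simp
      simp only [Lag, hBagag, map_zero, sub_zero, apply_ite (mul _), map_smul, smul_sub,
        Finset.sum_sub_distrib]
      rw [e1, e2]
      module
    rw [h1]
    simp only [θ, map_add, map_neg, map_smul, map_sum, LaA, hBag]
    rw [h2, smul_smul, inv_mul_cancel₀ (by norm_num), one_smul]
    simp [apply_ite (mul _), (honemul _).2]
  have DA : ∀ x, B θ (φ x) = -∑ a, mul (φ (P x (J a))) (gh a) := fun x => by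
    have h1 : B θ (φ x) = - B (φ x) θ := by
      have := hBanti _ _ _ hθ _ (hφdeg x)
      simpa [g0] using this
    rw [h1]
    simp [θ, LAg, LAA, hBAag, hBAgh]
  have Lθg : ∀ a z, B θ (mul (gh a) z) = mul (B θ (gh a)) z - mul (gh a) (B θ z) := fun a z => by
    have := hBleib _ _ _ hθ _ (hghdeg a) z
    simpa [g1, sub_eq_add_neg] using this
  have LθA : ∀ x z, B θ (mul (φ x) z) = mul (B θ (φ x)) z + mul (φ x) (B θ z) := fun x z => by
    have := hBleib _ _ _ hθ _ (hφdeg x) z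
    simpa [g0] using this
  -- cubic monomials and their cyclic symmetry
  obtain ⟨X, hX⟩ : ∃ X : Fin ℓ → Fin ℓ → Fin ℓ → Fin ℓ → W, ∀ p q r s,
    X p q r s = mul (gh p) (mul (gh q) (mul (gh r) (ag s))) := ⟨_, fun _ _ _ _ => rfl⟩
  have hswap : ∀ p q z, mul (gh p) (mul (gh q) z) = - mul (gh q) (mul (gh p) z) := fun p q z => by
    rw [← hmulassoc, hcgg, ← hmulassoc]
    simp
  have hXc : ∀ p q r s, X p q r s = X q r p s := fun p q r s => by
    rw [hX, hX, hswap p q, hswap p r]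
    simp
  obtain ⟨T, hT⟩ : ∃ T : W, T = ∑ p, ∑ q, ∑ r, ∑ s, ∑ e, (f p q e * f e r s) • X p q r s :=
    ⟨_, rfl⟩
  have hT2 : T = ∑ p, ∑ q, ∑ r, ∑ s, ∑ e, (f q r e * f e p s) • X p q r s := by
    rw [hT]
    conv_rhs => 
      rw [Finset.sum_comm]
      enter [2, q]
      rw [Finset.sum_comm]
    refine Finset.sum_congr rfl fun p _ => Finset.sum_congr rfl fun q _ =>
      Finset.sum_congr rfl fun r _ => Finset.sum_congr rfl fun s _ =>
      Finset.sum_congr rfl fun e _ => ?_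
    rw [hXc r p q s]
  have hT3 : T = ∑ p, ∑ q, ∑ r, ∑ s, ∑ e, (f r p e * f e q s) • X p q r s := by
    rw [hT2]
    conv_rhs =>
      rw [Finset.sum_comm]
      enter [2, q]
      rw [Finset.sum_comm]
    refine Finset.sum_congr rfl fun p _ => Finset.sum_congr rfl fun q _ =>
      Finset.sum_congr rfl fun r _ => Finset.sum_congr rfl fun s _ =>
      Finset.sum_congr rfl fun e _ => ?_
    rw [hXc r p q s]
  have hT0 : T = 0 := by
    have h3 : T + T + T = 0 := by
      conv_lhs =>
        arg 2
        rw [hT3]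
      conv_lhs =>
        arg 1
        arg 2
        rw [hT2]
      conv_lhs =>
        arg 1
        arg 1
        rw [hT]
      simp only [← Finset.sum_add_distrib, ← add_smul, ← Finset.sum_smul, hfjac, zero_smul,
        Finset.sum_const_zero]
    have h4 : (3 : K) • T = 0 := by
      rw [← h3]
      module
    exact (smul_eq_zero.mp h4).resolve_left (by norm_num)
  obtain ⟨Y, hY⟩ : ∃ Y : W, Y = ∑ a, ∑ b, ∑ c, f a b c • mul (φ (J c)) (mul (gh a) (gh b)) :=
    ⟨_, rfl⟩
  have S1 : (∑ a, ∑ b, ∑ c, f a b c • mul (B θ (gh a)) (mul (gh b) (ag c))) = 0 := by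
    have : (∑ a, ∑ b, ∑ c, f a b c • mul (B θ (gh a)) (mul (gh b) (ag c)))
        = -((2 : K)⁻¹ • T) := by
      simp only [Dg, map_neg, map_smul, map_sum, LinearMap.neg_apply, LinearMap.smul_apply,
        LinearMap.sum_apply, hmulassoc, ← hX, smul_neg, Finset.sum_neg_distrib, hT,
        Finset.smul_sum, smul_smul]
      congr 1
      -- order: e r s p q
      rw [brst_sum5]
      refine Finset.sum_congr rfl fun p _ => Finset.sum_congr rfl fun q _ =>
        Finset.sum_congr rfl fun r _ => Finset.sum_congr rfl fun s _ =>
        Finset.sum_congr rfl fun e _ => ?_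
      congr 1
      ring
    rw [this, hT0]
    simp
  have S2 : (∑ a, ∑ b, ∑ c, f a b c • mul (gh a) (mul (B θ (gh b)) (ag c))) = 0 := by
    have : (∑ a, ∑ b, ∑ c, f a b c • mul (gh a) (mul (B θ (gh b)) (ag c)))
        = ((2 : K)⁻¹ • T) := by
      simp only [Dg, map_neg, map_smul, map_sum, LinearMap.neg_apply, LinearMap.smul_apply,
        LinearMap.sum_apply, hmulassoc, ← hX, smul_neg, hT2, 
        Finset.smul_sum, smul_smul, ← Finset.sum_neg_distrib, ← neg_smul]
      refine Finset.sum_congr rfl fun p _ => ?_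
      rw [brst_sum4]
      refine Finset.sum_congr rfl fun q _ =>
        Finset.sum_congr rfl fun r _ => Finset.sum_congr rfl fun s _ =>
        Finset.sum_congr rfl fun e _ => ?_
      rw [hfanti p e s]
      congr 1
      ring
    rw [this, hT0]
    simp
  have S3 : (∑ a, ∑ b, ∑ c, f a b c • mul (gh a) (mul (gh b) (B θ (ag c)))) = (2 : K) • Y := by
    have hz : (∑ a, ∑ b, ∑ c, f a b c •
        mul (gh a) (mul (gh b) (∑ r, ∑ s, f c r s • mul (gh r) (ag s)))) = T := by
      simp only [map_smul, map_sum, ← hX, hT, Finset.smul_sum, smul_smul]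
      refine Finset.sum_congr rfl fun p _ => Finset.sum_congr rfl fun q _ => ?_
      rw [Finset.sum_comm]
      refine Finset.sum_congr rfl fun r _ => ?_
      rw [Finset.sum_comm]
    have hy : (∑ a, ∑ b, ∑ c, f a b c • mul (gh a) (mul (gh b) (φ (J c)))) = Y := by
      rw [hY]
      refine Finset.sum_congr rfl fun a _ => Finset.sum_congr rfl fun b _ =>
        Finset.sum_congr rfl fun c _ => ?_
      rw [hcφ, ← hmulassoc, hcφ, hmulassoc]
    calc _ = -(∑ a, ∑ b, ∑ c, f a b c •
          mul (gh a) (mul (gh b) (∑ r, ∑ s, f c r s • mul (gh r) (ag s))))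
          + (2 : K) • (∑ a, ∑ b, ∑ c, f a b c • mul (gh a) (mul (gh b) (φ (J c)))) := by
          rw [Finset.smul_sum]
          simp_rw [Finset.smul_sum (r := (2 : K))]
          simp only [← Finset.sum_neg_distrib, ← Finset.sum_add_distrib]
          refine Finset.sum_congr rfl fun a _ => Finset.sum_congr rfl fun b _ =>
            Finset.sum_congr rfl fun c _ => ?_
          rw [Da, map_add, map_add, map_neg, map_neg, map_smul, map_smul]
          module
      _ = _ := by rw [hz, hy, hT0]; simp
  have S4 : (∑ a, mul (B θ (φ (J a))) (gh a)) = Y := by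
    simp only [DA, hJ, map_neg, map_sum, map_smul, LinearMap.neg_apply, LinearMap.sum_apply,
      LinearMap.smul_apply, hmulassoc, hY, ← Finset.sum_neg_distrib]
    refine Finset.sum_congr rfl fun a _ => Finset.sum_congr rfl fun b _ =>
        Finset.sum_congr rfl fun c _ => ?_
    rw [hcgg a b]
    simp
  have S5 : (∑ a, mul (φ (J a)) (B θ (gh a))) = -((2 : K)⁻¹ • Y) := by
    simp only [Dg, map_neg, map_sum, map_smul, hY, Finset.sum_neg_distrib, ← Finset.smul_sum]
    congr 2
    rw [Finset.sum_comm]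
    refine Finset.sum_congr rfl fun a _ => ?_
    rw [Finset.sum_comm]
  have hfin : B θ θ = -((4 : K)⁻¹ • (
      (∑ a, ∑ b, ∑ c, f a b c • mul (B θ (gh a)) (mul (gh b) (ag c)))
      - (∑ a, ∑ b, ∑ c, f a b c • mul (gh a) (mul (B θ (gh b)) (ag c)))
      + (∑ a, ∑ b, ∑ c, f a b c • mul (gh a) (mul (gh b) (B θ (ag c))))))
      + ((∑ a, mul (B θ (φ (J a))) (gh a)) + (∑ a, mul (φ (J a)) (B θ (gh a)))) := by
    have : B θ θ = B θ (- ((4 : K)⁻¹ •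
      (∑ a, ∑ b, ∑ c, f a b c • mul (gh a) (mul (gh b) (ag c))))
      + ∑ a, mul (φ (J a)) (gh a)) := rfl
    rw [this]
    clear_value θ
    simp only [map_add, map_neg, map_smul, map_sum, Lθg, LθA, map_sub,
      ← Finset.sum_sub_distrib, ← Finset.sum_add_distrib]
    congr 3
    refine Finset.sum_congr rfl fun a _ => Finset.sum_congr rfl fun b _ =>
        Finset.sum_congr rfl fun c _ => ?_
    module
  rw [hfin, S1, S2, S3, S4, S5]
  module
end
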